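/- Let n ≥ 2 be a natural number, f > 0 a real number, f₁ ≠ 0 a real number, and (f_{ij}) a symmetric n×n real matrix. In the adapted case v = (f₁, 0, …, 0), with g_{ik}, g^{jl}, II_{ij}, R_{ik} and f̄^i defined by the standard graph formulas, one has the identity ∑_{i,k} R_{ik} f̄^i f̄^k = (f²/(1+f₁²)²)·((1+f₁²)/f + f_{11})·∑_{i=2}^n (f_{ii} + 1/f) − (n−1) − (f²/(1+f₁²)²)·∑_{i=2}^n f_{1i}². -/

import Mathlib

/-- Identity (3.7): the Ricci curvature of a vertical graph in the direction of the
normalized gradient of `f`, in adapted coordinates where the gradient is `(f₁,0,…,0)`. -/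
theorem ricci_normalized_gradient_adapted (n : ℕ) (hn : 2 ≤ n)
    (f : ℝ) (hf : 0 < f) (f₁ : ℝ) (hf₁ : f₁ ≠ 0)
    (i₀ : Fin n) (hi₀ : (i₀ : ℕ) = 0)
    (v : Fin n → ℝ) (hv : v = fun i => if i = i₀ then f₁ else 0)
    (fd : Fin n → Fin n → ℝ) (hfd : ∀ i j, fd i j = fd j i)
    (Df2 : ℝ) (hDf2 : Df2 = ∑ i, (v i) ^ 2)
    (g gInv II R : Fin n → Fin n → ℝ) (fbar : Fin n → ℝ)
    (hg : ∀ i k, g i k = (1 / f ^ 2) * ((if i = k then (1:ℝ) else 0) + v i * v k))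
    (hgInv : ∀ j l, gInv j l =
      f ^ 2 * ((if j = l then (1:ℝ) else 0) - v j * v l / (1 + Df2)))
    (hII : ∀ i j, II i j =
      ((if i = j then (1:ℝ) else 0) + v i * v j + f * fd i j) / (f ^ 2 * Real.sqrt (1 + Df2)))
    (hR : ∀ i k, R i k = -(n - 1 : ℝ) * g i k +
      ∑ j, ∑ l, gInv j l * (II i k * II j l - II i l * II j k))
    (hfbar : ∀ i, fbar i = f * v i / (Real.sqrt Df2 * Real.sqrt (1 + Df2))) :
    ∑ i, ∑ k, R i k * fbar i * fbar k =
      (f ^ 2 / (1 + f₁ ^ 2) ^ 2) * ((1 + f₁ ^ 2) / f + fd i₀ i₀) *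
          (∑ i ∈ Finset.univ.erase i₀, (fd i i + 1 / f))
        - (n - 1 : ℝ)
        - (f ^ 2 / (1 + f₁ ^ 2) ^ 2) * ∑ i ∈ Finset.univ.erase i₀, (fd i₀ i) ^ 2 := by
  have hv₀ : v i₀ = f₁ := by simp [hv]
  have hv' : ∀ i, i ≠ i₀ → v i = 0 := fun i hi => by simp [hv, hi]
  have hD : Df2 = f₁ ^ 2 := by
    rw [hDf2, Fintype.sum_eq_single i₀ fun i hi => by simp [hv' i hi], hv₀]
  have hW : 0 < 1 + f₁ ^ 2 := by positivity
  have hfW : Real.sqrt (1 + f₁ ^ 2) ^ 2 = 1 + f₁ ^ 2 := Real.sq_sqrt hW.le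
  -- Only the `i₀ i₀` entry of the Ricci tensor contributes.
  have hfbar' : ∀ i, i ≠ i₀ → fbar i = 0 := fun i hi => by simp [hfbar, hv' i hi]
  have hfbar₀ : fbar i₀ * fbar i₀ = f ^ 2 / (1 + f₁ ^ 2) := by
    have hsq : Real.sqrt (f₁ ^ 2) ^ 2 = f₁ ^ 2 := Real.sq_sqrt (sq_nonneg f₁)
    rw [hfbar, hD, hv₀, ← sq, div_pow, mul_pow, mul_pow, hsq, hfW]
    field_simp
  have hsum : ∑ i, ∑ k, R i k * fbar i * fbar k = R i₀ i₀ * (f ^ 2 / (1 + f₁ ^ 2)) := by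
    rw [Fintype.sum_eq_single i₀ fun i hi => by simp [hfbar' i hi],
      Fintype.sum_eq_single i₀ fun k hk => by simp [hfbar' k hk], mul_assoc, hfbar₀]
  -- The inverse metric is diagonal, with entry `f ^ 2` away from `i₀`.
  have hoff : ∀ j l, l ≠ j → gInv j l = 0 := by
    intro j l hlj
    rw [hgInv, if_neg hlj.symm]
    by_cases hj : j = i₀
    · simp [hv' l (hj ▸ hlj)]
    · simp [hv' j hj]
  have hdiag : ∀ j, j ≠ i₀ → gInv j j = f ^ 2 := fun j hj => by simp [hgInv, hv' j hj]
  have hterm : ∀ j, j ≠ i₀ → gInv j j * (II i₀ i₀ * II j j - II i₀ j * II j i₀) =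
      ((1 + f₁ ^ 2 + f * fd i₀ i₀) * (1 + f * fd j j) - f ^ 2 * fd i₀ j ^ 2) /
        (f ^ 2 * (1 + f₁ ^ 2)) := by
    intro j hj
    rw [hdiag j hj, hII, hII, hII, hII, hfd j i₀, if_pos rfl, if_pos rfl, if_neg hj.symm,
      if_neg hj, hv' j hj, hv₀, hD, div_mul_div_comm, div_mul_div_comm, ← sq (f ^ 2 * _),
      mul_pow (f ^ 2), hfW]
    field_simp
    ring
  have hcontr : ∑ j, ∑ l, gInv j l * (II i₀ i₀ * II j l - II i₀ l * II j i₀) =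
      ∑ j ∈ Finset.univ.erase i₀,
        ((1 + f₁ ^ 2 + f * fd i₀ i₀) * (1 + f * fd j j) - f ^ 2 * fd i₀ j ^ 2) /
          (f ^ 2 * (1 + f₁ ^ 2)) := by
    rw [Finset.sum_congr rfl fun j _ =>
        Fintype.sum_eq_single j fun l hl => by rw [hoff j l hl, zero_mul],
      ← Finset.add_sum_erase _ _ (Finset.mem_univ i₀), sub_self, mul_zero, zero_add]
    exact Finset.sum_congr rfl fun j hj => hterm j (Finset.ne_of_mem_erase hj)
  have hg₀ : g i₀ i₀ * (f ^ 2 / (1 + f₁ ^ 2)) = 1 := by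
    rw [hg, if_pos rfl, hv₀]
    field_simp
  rw [hsum, hR, hcontr, add_mul, mul_assoc, hg₀, Finset.sum_mul, Finset.mul_sum, Finset.mul_sum,
    sub_right_comm, ← Finset.sum_sub_distrib, mul_one, neg_add_eq_sub]
  congr 1
  refine Finset.sum_congr rfl fun j _ => ?_
  field_simp
  ring
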